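/- For every real K with 0 < K ≤ 2 there exists a function f : ℝ → ℝ, real-analytic on ℝ, with f(x+1) = f(x) + 1 and deriv f x > 0 for all x ∈ ℝ, such that: (i) the fixed point set of f is exactly ℤ (f x = x if and only if x is an integer); (ii) deriv f 0 = 1 and deriv (deriv f) 0 = 0; (iii) ∫_0^1 |deriv (deriv f) x| dx ≤ 2K; and (iv) liminf_{n→∞} (1/n) ∫_0^1 |deriv (deriv (f^[n])) x / deriv (f^[n]) x| dx > 0. -/

import Mathlib

open Filter intervalIntegral

lemma log_sub_le_two {a b : ℝ} (ha : 1/2 ≤ a) (hb : 1/2 ≤ b) :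
    |Real.log a - Real.log b| ≤ 2 * |a - b| := by
  have key : ∀ a b : ℝ, 1/2 ≤ a → 1/2 ≤ b → Real.log a - Real.log b ≤ 2 * |a - b| := by
    intro a b ha hb
    have ha' : 0 < a := by linarith
    have hb' : 0 < b := by linarith
    rw [← Real.log_div ha'.ne' hb'.ne']
    have h1 := Real.log_le_sub_one_of_pos (div_pos ha' hb')
    have h2 : a / b - 1 ≤ 2 * |a - b| := by
      have : a / b - 1 = (a - b) / b := by field_simp
      rw [this, div_le_iff₀ hb']
      nlinarith [le_abs_self (a - b), abs_nonneg (a - b)]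
    linarith
  rw [abs_le]
  constructor
  · have := key b a hb ha
    rw [abs_sub_comm] at this
    linarith
  · exact key a b ha hb

section gen
variable {f : ℝ → ℝ}

lemma contDiff_iter (hf : ContDiff ℝ 2 f) (n : ℕ) : ContDiff ℝ 2 (f^[n]) := by
  induction n with
  | zero => exact contDiff_id
  | succ n ih => rw [Function.iterate_succ']; exact hf.comp ih

lemma contDiff_deriv {g : ℝ → ℝ} (hf : ContDiff ℝ 2 g) : ContDiff ℝ 1 (deriv g) := by
  have : ContDiff ℝ (1 + 1) g := by norm_num; exact hf
  exact (contDiff_succ_iff_deriv.mp this).2.2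

lemma cont_dd {g : ℝ → ℝ} (hf : ContDiff ℝ 2 g) : Continuous (deriv (deriv g)) :=
  (contDiff_deriv hf).continuous_deriv (by norm_num)

lemma diff_d {g : ℝ → ℝ} (hf : ContDiff ℝ 2 g) : Differentiable ℝ (deriv g) :=
  (contDiff_deriv hf).differentiable (by norm_num)

lemma deriv_iter_succ (hf : ContDiff ℝ 2 f) (n : ℕ) (x : ℝ) :
    deriv (f^[n+1]) x = deriv f (f^[n] x) * deriv (f^[n]) x := by
  rw [Function.iterate_succ']
  exact deriv_comp x (hf.differentiable (by norm_num) _)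
    ((contDiff_iter hf n).differentiable (by norm_num) _)

lemma deriv_iter_pos (hf : ContDiff ℝ 2 f) (hpos : ∀ x, 1/2 ≤ deriv f x) (n : ℕ) (x : ℝ) :
    0 < deriv (f^[n]) x := by
  induction n with
  | zero => simp
  | succ n ih =>
    rw [deriv_iter_succ hf]
    exact mul_pos (by linarith [hpos (f^[n] x)]) ih

lemma log_deriv_iter (hf : ContDiff ℝ 2 f) (hpos : ∀ x, 1/2 ≤ deriv f x) (n : ℕ) (x : ℝ) :
    Real.log (deriv (f^[n]) x) = ∑ j ∈ Finset.range n, Real.log (deriv f (f^[j] x)) := by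
  induction n with
  | zero => simp
  | succ n ih =>
    rw [deriv_iter_succ hf, Finset.sum_range_succ, ← ih, Real.log_mul, add_comm]
    · linarith [hpos (f^[n] x)]
    · exact (deriv_iter_pos hf hpos n x).ne'

lemma hasDerivAt_log_iter (hf : ContDiff ℝ 2 f) (hpos : ∀ x, 1/2 ≤ deriv f x) (n : ℕ) (x : ℝ) :
    HasDerivAt (fun x => Real.log (deriv (f^[n]) x))
      (deriv (deriv (f^[n])) x / deriv (f^[n]) x) x :=
  ((diff_d (contDiff_iter hf n)) x).hasDerivAt.log (deriv_iter_pos hf hpos n x).ne'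

lemma cont_h (hf : ContDiff ℝ 2 f) (hpos : ∀ x, 1/2 ≤ deriv f x) (n : ℕ) :
    Continuous (fun x => deriv (deriv (f^[n])) x / deriv (f^[n]) x) :=
  (cont_dd (contDiff_iter hf n)).div (diff_d (contDiff_iter hf n)).continuous
    (fun x => (deriv_iter_pos hf hpos n x).ne')

lemma strictMono_f (hpos : ∀ x, 1/2 ≤ deriv f x) : StrictMono f :=
  strictMono_of_deriv_pos (fun x => by linarith [hpos x])

lemma h_succ (hf : ContDiff ℝ 2 f) (hpos : ∀ x, 1/2 ≤ deriv f x) (n : ℕ) (x : ℝ) :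
    deriv (deriv (f^[n+1])) x / deriv (f^[n+1]) x =
      (deriv (deriv f) (f^[n] x) / deriv f (f^[n] x)) * deriv (f^[n]) x +
      deriv (deriv (f^[n])) x / deriv (f^[n]) x := by
  have e : deriv (f^[n+1]) = fun x => deriv f (f^[n] x) * deriv (f^[n]) x :=
    funext (deriv_iter_succ hf n)
  have d1 : HasDerivAt (f^[n]) (deriv (f^[n]) x) x :=
    ((contDiff_iter hf n).differentiable (by norm_num) x).hasDerivAt
  have d2 : HasDerivAt (deriv f) (deriv (deriv f) (f^[n] x)) (f^[n] x) :=
    (diff_d hf _).hasDerivAt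
  have d3 : HasDerivAt (deriv (f^[n])) (deriv (deriv (f^[n])) x) x :=
    (diff_d (contDiff_iter hf n) _).hasDerivAt
  have d4 := (d2.comp x d1).mul d3
  have e2 : deriv (deriv (f^[n+1])) x = deriv (deriv f) (f^[n] x) * deriv (f^[n]) x * deriv (f^[n]) x + deriv f (f^[n] x) * deriv (deriv (f^[n])) x := by
    rw [e]; exact d4.deriv
  rw [e2, deriv_iter_succ hf]
  have p1 := deriv_iter_pos hf hpos n x
  have p2 : 0 < deriv f (f^[n] x) := by linarith [hpos (f^[n] x)]
  field_simp

lemma upper (hf : ContDiff ℝ 2 f) (hpos : ∀ x, 1/2 ≤ deriv f x) (h0 : f 0 = 0) (h1 : f 1 = 1)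
    (n : ℕ) :
    ∫ x in (0:ℝ)..1, |deriv (deriv (f^[n])) x / deriv (f^[n]) x| ≤
      n * ∫ x in (0:ℝ)..1, |deriv (deriv f) x / deriv f x| := by
  induction n with
  | zero => simp [show deriv (id : ℝ → ℝ) = fun _ => 1 from funext fun x => deriv_id x]
  | succ n ih =>
    have i0 : f^[n] 0 = 0 := Function.iterate_fixed h0 n
    have i1 : f^[n] 1 = 1 := Function.iterate_fixed h1 n
    have c1 : Continuous (fun x => |deriv (deriv f) x / deriv f x|) := by
      simpa using (cont_h hf hpos 1).abs
    have cn := (cont_h hf hpos n).abs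
    have cd : Continuous (deriv (f^[n])) := (diff_d (contDiff_iter hf n)).continuous
    have ci : Continuous (f^[n]) := (contDiff_iter hf n).continuous
    have hsub : ∫ x in (0:ℝ)..1, |deriv (deriv f) (f^[n] x) / deriv f (f^[n] x)| * deriv (f^[n]) x
        = ∫ x in (0:ℝ)..1, |deriv (deriv f) x / deriv f x| := by
      have := intervalIntegral.integral_comp_mul_deriv (a := 0) (b := 1) (f := f^[n])
        (f' := deriv (f^[n])) (g := fun x => |deriv (deriv f) x / deriv f x|)
        (fun x _ => ((contDiff_iter hf n).differentiable (by norm_num) x).hasDerivAt)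
        cd.continuousOn c1
      rw [i0, i1] at this
      exact this
    have c2 : Continuous fun x => |deriv (deriv f) (f^[n] x) / deriv f (f^[n] x)| * deriv (f^[n]) x :=
      (c1.comp ci).mul cd
    calc _ ≤ ∫ x in (0:ℝ)..1, (|deriv (deriv f) (f^[n] x) / deriv f (f^[n] x)| * deriv (f^[n]) x
            + |deriv (deriv (f^[n])) x / deriv (f^[n]) x|) := by
          apply intervalIntegral.integral_mono_on (by norm_num)
          · exact ((cont_h hf hpos (n+1)).abs).intervalIntegrable _ _
          · exact (c2.add cn).intervalIntegrable _ _
          · intro x _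
            rw [h_succ hf hpos]
            refine (abs_add_le _ _).trans ?_
            rw [abs_mul, abs_of_pos (deriv_iter_pos hf hpos n x)]
      _ = _ := by
          rw [intervalIntegral.integral_add (c2.intervalIntegrable _ _) (cn.intervalIntegrable _ _), hsub]
      _ ≤ _ := by push_cast; linarith

/-- one-step distortion -/
lemma step (hf : ContDiff ℝ 2 f) (hpos : ∀ x, 1/2 ≤ deriv f x) {x y z : ℝ}
    (hxy : x < y) (hyz : y < z) :
    |(Real.log (f y - f x) - Real.log (f z - f x)) - (Real.log (y - x) - Real.log (z - x))|
      ≤ (∫ t in (0:ℝ)..z, 2 * |deriv (deriv f) t|) - ∫ t in (0:ℝ)..x, 2 * |deriv (deriv f) t| := by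
  have hd : Differentiable ℝ f := hf.differentiable (by norm_num)
  obtain ⟨u, hu, hu'⟩ := exists_deriv_eq_slope f hxy hd.continuous.continuousOn
    hd.differentiableOn
  obtain ⟨v, hv, hv'⟩ := exists_deriv_eq_slope f (hxy.trans hyz) hd.continuous.continuousOn
    hd.differentiableOn
  have p1 : 0 < y - x := by linarith
  have p2 : 0 < z - x := by linarith
  have q1 : 0 < f y - f x := by linarith [strictMono_f hpos hxy]
  have q2 : 0 < f z - f x := by linarith [strictMono_f hpos (hxy.trans hyz)]
  have e1 : Real.log (deriv f u) = Real.log (f y - f x) - Real.log (y - x) := by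
    rw [hu', Real.log_div q1.ne' p1.ne']
  have e2 : Real.log (deriv f v) = Real.log (f z - f x) - Real.log (z - x) := by
    rw [hv', Real.log_div q2.ne' p2.ne']
  have e3 : (Real.log (f y - f x) - Real.log (f z - f x)) - (Real.log (y - x) - Real.log (z - x))
    = Real.log (deriv f u) - Real.log (deriv f v) := by rw [e1, e2]; ring
  have cc : Continuous fun t => 2 * |deriv (deriv f) t| := (cont_dd hf).abs.const_mul 2 
  rw [e3, intervalIntegral.integral_interval_sub_left (cc.intervalIntegrable _ _) (cc.intervalIntegrable _ _)]
  refine (log_sub_le_two (hpos u) (hpos v)).trans ?_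
  rw [intervalIntegral.integral_const_mul]
  gcongr
  have e4 : deriv f u - deriv f v = ∫ t in v..u, deriv (deriv f) t := by
    rw [intervalIntegral.integral_deriv_eq_sub (fun t _ => diff_d hf t) ((cont_dd hf).intervalIntegrable _ _)]
  rw [e4]
  have hi : ∀ a b : ℝ, IntervalIntegrable (fun t => |deriv (deriv f) t|) MeasureTheory.volume a b :=
    fun a b => (cont_dd hf).abs.intervalIntegrable _ _
  have h9 := intervalIntegral.norm_integral_le_abs_integral_norm (f := deriv (deriv f))
    (a := v) (b := u) (μ := MeasureTheory.volume)
  simp only [Real.norm_eq_abs] at h9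
  refine h9.trans ?_
  rw [← abs_of_nonneg (intervalIntegral.integral_nonneg (hxy.trans hyz).le (fun t _ => abs_nonneg (deriv (deriv f) t)))]
  apply intervalIntegral.abs_integral_mono_interval
  · rw [Set.uIoc_of_le (hxy.trans hyz).le]
    intro t ht
    rw [Set.mem_uIoc] at ht
    obtain ⟨u1, u2⟩ := hu
    obtain ⟨v1, v2⟩ := hv
    rcases ht with ⟨a, b⟩ | ⟨a, b⟩
    · constructor <;> linarith
    · constructor <;> linarith
  · exact Eventually.of_forall fun t => abs_nonneg _
  · exact hi _ _

lemma orbit (hf : ContDiff ℝ 2 f) (hpos : ∀ x, 1/2 ≤ deriv f x) (h0 : f 0 = 0) (h1 : f 1 = 1)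
    (hlt : ∀ x, 0 < x → x < 1 → x < f x)
    (hV : ∫ x in (0:ℝ)..1, |deriv (deriv f) x| ≤ 1/2)
    {q p b₁ b₂ L σ : ℝ} (hqp : q < p) (hpq : p < f q)
    (hb₁ : p ≤ f b₁) (hb₂ : b₂ ≤ f q) (hL0 : 0 ≤ L)
    (hL₁ : ∀ x, 0 ≤ x → x ≤ b₁ → |deriv (deriv f) x| ≤ L)
    (hL₂ : ∀ x, b₂ ≤ x → x ≤ 1 → |deriv (deriv f) x| ≤ L)
    (hjump : 2 * σ ≤ Real.log (deriv f q) - Real.log (deriv f p))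
    (hsmall : 2 * L * (Real.exp 1 * ((p - q) / (f q - q))) ≤ σ)
    (n k : ℕ) (hkn : k < n) (x₀ y₀ : ℝ) (hx₀ : 0 < x₀) (hx₁ : x₀ < 1) (hy₀ : 0 < y₀) (hy₁ : y₀ < 1)
    (hxk : f^[k] x₀ = q) (hyk : f^[k] y₀ = p) :
    σ ≤ Real.log (deriv (f^[n]) x₀) - Real.log (deriv (f^[n]) y₀) := by
  have hm : StrictMono f := strictMono_f hpos
  have him : ∀ j, StrictMono (f^[j]) := fun j => hm.iterate j
  have i0 : ∀ j, f^[j] 0 = 0 := fun j => Function.iterate_fixed h0 j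
  have i1 : ∀ j, f^[j] 1 = 1 := fun j => Function.iterate_fixed h1 j
  set x : ℕ → ℝ := fun j => f^[j] x₀ with hx
  set y : ℕ → ℝ := fun j => f^[j] y₀ with hy
  have xs : ∀ j, x (j+1) = f (x j) := fun j => Function.iterate_succ_apply' f j x₀
  have ys : ∀ j, y (j+1) = f (y j) := fun j => Function.iterate_succ_apply' f j y₀
  have xp : ∀ j, 0 < x j := fun j => by have := him j hx₀; rwa [i0] at this
  have yp : ∀ j, 0 < y j := fun j => by have := him j hy₀; rwa [i0] at this
  have xl : ∀ j, x j < 1 := fun j => by have := him j hx₁; rwa [i1] at this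
  have yl : ∀ j, y j < 1 := fun j => by have := him j hy₁; rwa [i1] at this
  have hxk' : x k = q := hxk
  have hyk' : y k = p := hyk
  have xy0 : x₀ < y₀ := by rw [← (him k).lt_iff_lt, hxk, hyk]; exact hqp
  have xy : ∀ j, x j < y j := fun j => him j xy0
  have yx0 : y₀ < f x₀ := by
    rw [← (him k).lt_iff_lt, hyk, ← Function.iterate_succ_apply, Function.iterate_succ_apply', hxk]
    exact hpq
  have yx : ∀ j, y j < x (j+1) := fun j => by
    have := him j yx0
    rwa [← Function.iterate_succ_apply] at this
  have xm : Monotone x := monotone_nat_of_le_succ fun j => by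
    rw [xs]; exact (hlt _ (xp j) (xl j)).le
  have ym : Monotone y := monotone_nat_of_le_succ fun j => by
    rw [ys]; exact (hlt _ (yp j) (yl j)).le
  set W : ℝ → ℝ := fun z => ∫ t in (0:ℝ)..z, 2 * |deriv (deriv f) t| with hW
  have cc : Continuous fun t => 2 * |deriv (deriv f) t| := (cont_dd hf).abs.const_mul 2
  have Wm : Monotone W := by
    intro a b hab
    have : W b - W a = ∫ t in a..b, 2 * |deriv (deriv f) t| := by
      rw [hW]
      exact intervalIntegral.integral_interval_sub_left (cc.intervalIntegrable _ _) (cc.intervalIntegrable _ _)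
    have h2 : 0 ≤ ∫ t in a..b, 2 * |deriv (deriv f) t| :=
      intervalIntegral.integral_nonneg hab (fun t _ => by positivity)
    linarith
  have W0 : W 0 = 0 := by simp [hW]
  have W1 : W 1 ≤ 1 := by
    have : W 1 = 2 * ∫ x in (0:ℝ)..1, |deriv (deriv f) x| := by
      simp only [hW]; rw [intervalIntegral.integral_const_mul]
    linarith
  set R : ℕ → ℝ := fun j => Real.log (y j - x j) - Real.log (x (j+1) - x j) with hR
  have Rstep : ∀ j, |R (j+1) - R j| ≤ W (x (j+1)) - W (x j) := by
    intro j
    have := step hf hpos (xy j) (yx j)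
    rw [← ys, ← xs, ← xs] at this
    exact this
  have Rdiff : ∀ i d, |R (i+d) - R i| ≤ W (x (i+d)) - W (x i) := by
    intro i d
    induction d with
    | zero => simp
    | succ d ih =>
      have h2 := Rstep (i+d)
      rw [← add_assoc]
      have := abs_sub_le (R (i+d+1)) (R (i+d)) (R i)
      linarith
  have Wb : ∀ i j, W (x j) - W (x i) ≤ 1 := fun i j => by
    have h1 := Wm (xl j).le
    have h2 := Wm (xp i).le
    linarith
  have Rb : ∀ j, R j - R k ≤ 1 := by
    intro j
    rcases le_total k j with h | h
    · obtain ⟨d, rfl⟩ := Nat.exists_eq_add_of_le h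
      exact (le_abs_self _).trans ((Rdiff k d).trans (Wb _ _))
    · obtain ⟨d, rfl⟩ := Nat.exists_eq_add_of_le h
      have := (neg_le_abs _).trans ((Rdiff j d).trans (Wb _ _))
      linarith
  set r := (p - q) / (f q - q) with hr
  have hA : ∀ j, y j - x j ≤ Real.exp 1 * r * (x (j+1) - x j) := by
    intro j
    have a1 : 0 < y j - x j := by linarith [xy j]
    have a2 : 0 < x (j+1) - x j := by linarith [xy j, yx j]
    have b1 : 0 < p - q := by linarith
    have b2 : 0 < f q - q := by linarith
    have hRk : R k = Real.log (p - q) - Real.log (f q - q) := by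
      simp only [hR]; rw [xs, hxk', hyk']
    have h3 := Rb j
    rw [hRk] at h3
    have h4 : Real.log (y j - x j) ≤ Real.log (Real.exp 1 * r * (x (j+1) - x j)) := by
      rw [Real.log_mul (by positivity) a2.ne', Real.log_mul (by positivity) (by positivity),
        Real.log_exp, hr, Real.log_div b1.ne' b2.ne']
      simp only [hR] at h3
      linarith
    exact (Real.log_le_log_iff a1 (by positivity)).mp h4
  have lipb : ∀ j, (∀ t ∈ Set.Icc (x j) (y j), |deriv (deriv f) t| ≤ L) →
      -(2 * L * (y j - x j)) ≤ Real.log (deriv f (x j)) - Real.log (deriv f (y j)) := by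
    intro j h
    have := (convex_Icc (x j) (y j)).norm_image_sub_le_of_norm_deriv_le (f := deriv f) (C := L)
      (fun t _ => diff_d hf t) h (Set.right_mem_Icc.2 (xy j).le) (Set.left_mem_Icc.2 (xy j).le)
    rw [Real.norm_eq_abs, Real.norm_eq_abs, abs_sub_comm (x j) (y j), abs_of_pos (by linarith [xy j] : 0 < y j - x j)] at this
    have h2 := log_sub_le_two (hpos (x j)) (hpos (y j))
    have h3 := neg_abs_le (Real.log (deriv f (x j)) - Real.log (deriv f (y j)))
    linarith
  have term : ∀ j ∈ Finset.range n, (if j = k then 2 * σ else 0) - 2 * L * (Real.exp 1 * r) * (x (j+1) - x j)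
      ≤ Real.log (deriv f (x j)) - Real.log (deriv f (y j)) := by
    intro j _
    have hmul : 2 * L * (y j - x j) ≤ 2 * L * (Real.exp 1 * r) * (x (j+1) - x j) := by
      have := mul_le_mul_of_nonneg_left (hA j) (by positivity : 0 ≤ 2 * L)
      linarith
    have hnn : 0 ≤ 2 * L * (y j - x j) := mul_nonneg (by positivity) (by linarith [xy j])
    rcases lt_trichotomy j k with h | h | h
    · rw [if_neg h.ne]
      have hyb : y j ≤ b₁ := by
        rw [← hm.le_iff_le, ← ys]
        refine le_trans ?_ hb₁
        rw [← hyk']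
        exact ym h
      have := lipb j (fun t ht => hL₁ t (by linarith [xp j, ht.1]) (ht.2.trans hyb))
      linarith
    · rw [if_pos h, h, hxk', hyk']
      rw [h, hxk', hyk'] at hmul hnn
      linarith
    · rw [if_neg h.ne']
      have hxb : b₂ ≤ x j := by
        refine hb₂.trans ?_
        rw [← hxk', ← xs]
        exact xm h
      have := lipb j (fun t ht => hL₂ t (hxb.trans ht.1) (by linarith [yl j, ht.2]))
      linarith
  have hs := Finset.sum_le_sum term
  rw [Finset.sum_sub_distrib, Finset.sum_sub_distrib, ← Finset.mul_sum, Finset.sum_range_sub,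
    Finset.sum_ite_eq', if_pos (Finset.mem_range.2 hkn)] at hs
  rw [log_deriv_iter hf hpos, log_deriv_iter hf hpos]
  have hr0 : 0 ≤ r := div_nonneg (by linarith) (by linarith)
  have hc : 0 ≤ 2 * L * (Real.exp 1 * r) := by positivity
  have : 2 * L * (Real.exp 1 * r) * (x n - x 0) ≤ σ := by
    have := mul_le_mul_of_nonneg_left (by linarith [xl n, xp 0] : x n - x 0 ≤ 1) hc
    linarith
  linarith

lemma liminf_pos (hf : ContDiff ℝ 2 f) (hpos : ∀ x, 1/2 ≤ deriv f x) (h0 : f 0 = 0) (h1 : f 1 = 1)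
    (hlt : ∀ x, 0 < x → x < 1 → x < f x)
    (hV : ∫ x in (0:ℝ)..1, |deriv (deriv f) x| ≤ 1/2)
    {q p b₁ b₂ L σ : ℝ} (hq0 : 0 < q) (hp1 : p < 1) (hqp : q < p) (hpq : p < f q)
    (hb₁ : p ≤ f b₁) (hb₂ : b₂ ≤ f q) (hL0 : 0 ≤ L)
    (hL₁ : ∀ x, 0 ≤ x → x ≤ b₁ → |deriv (deriv f) x| ≤ L)
    (hL₂ : ∀ x, b₂ ≤ x → x ≤ 1 → |deriv (deriv f) x| ≤ L) (hσ : 0 < σ)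
    (hjump : 2 * σ ≤ Real.log (deriv f q) - Real.log (deriv f p))
    (hsmall : 2 * L * (Real.exp 1 * ((p - q) / (f q - q))) ≤ σ) :
    0 < Filter.liminf
        (fun n : ℕ => (1 / (n : ℝ)) *
          ∫ x in (0:ℝ)..1, |deriv (deriv (f^[n])) x / deriv (f^[n]) x|)
        Filter.atTop := by
  have hm : StrictMono f := strictMono_f hpos
  have hsurj : ∀ y ∈ Set.Ioo (0:ℝ) 1, ∃ x ∈ Set.Ioo (0:ℝ) 1, f x = y := by
    intro y hy
    have := intermediate_value_Ioo (zero_le_one' ℝ) (hf.continuous.continuousOn (s := Set.Icc 0 1))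
    rw [h0, h1] at this
    exact this hy
  choose! g hg using hsurj
  have hgi : ∀ k, ∀ y ∈ Set.Ioo (0:ℝ) 1, g^[k] y ∈ Set.Ioo (0:ℝ) 1 ∧ f^[k] (g^[k] y) = y := by
    intro k y hy
    induction k with
    | zero => exact ⟨hy, rfl⟩
    | succ k ih =>
      have h := hg _ ih.1
      rw [Function.iterate_succ_apply' g]
      refine ⟨h.1, ?_⟩
      rw [Function.iterate_succ_apply, h.2]
      exact ih.2
  set P : ℕ → ℝ := fun k => g^[k] p
  set Q : ℕ → ℝ := fun k => g^[k] q
  have hpI : p ∈ Set.Ioo (0:ℝ) 1 := ⟨by linarith, hp1⟩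
  have hqI : q ∈ Set.Ioo (0:ℝ) 1 := ⟨hq0, by linarith⟩
  have hP : ∀ k, P k ∈ Set.Ioo (0:ℝ) 1 ∧ f^[k] (P k) = p := fun k => hgi k p hpI
  have hQ : ∀ k, Q k ∈ Set.Ioo (0:ℝ) 1 ∧ f^[k] (Q k) = q := fun k => hgi k q hqI
  have hQP : ∀ k, Q k < P k := fun k => by
    rw [← (hm.iterate k).lt_iff_lt, (hP k).2, (hQ k).2]; exact hqp
  have hPQ : ∀ k, P (k+1) < Q k := fun k => by
    rw [← (hm.iterate (k+1)).lt_iff_lt, (hP (k+1)).2, Function.iterate_succ_apply', (hQ k).2]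
    exact hpq
  have lower : ∀ n : ℕ, n * σ ≤ ∫ x in (0:ℝ)..1, |deriv (deriv (f^[n])) x / deriv (f^[n]) x| := by
    intro n
    have ch := cont_h hf hpos n
    set h := fun x => deriv (deriv (f^[n])) x / deriv (f^[n]) x with hh
    have hI : ∀ a b, IntervalIntegrable (fun x => |h x|) MeasureTheory.volume a b :=
      fun a b => ch.abs.intervalIntegrable a b
    set F : ℝ → ℝ := fun z => ∫ t in (0:ℝ)..z, |h t| with hF
    have Fsub : ∀ a b, F b - F a = ∫ t in a..b, |h t| := fun a b =>
      intervalIntegral.integral_interval_sub_left (hI _ _) (hI _ _)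
    have Fm : Monotone F := by
      intro a b hab
      have h2 : 0 ≤ ∫ t in a..b, |h t| :=
        intervalIntegral.integral_nonneg hab (fun t _ => abs_nonneg _)
      linarith [Fsub a b]
    have Fk : ∀ k, k < n → σ ≤ F (P k) - F (Q k) := by
      intro k hk
      have o := orbit hf hpos h0 h1 hlt hV hqp hpq hb₁ hb₂ hL0 hL₁ hL₂ hjump hsmall n k hk
        (Q k) (P k) (hQ k).1.1 (hQ k).1.2 (hP k).1.1 (hP k).1.2 (hQ k).2 (hP k).2
      have e : ∫ t in (Q k)..(P k), h t = Real.log (deriv (f^[n]) (P k)) - Real.log (deriv (f^[n]) (Q k)) :=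
        intervalIntegral.integral_eq_sub_of_hasDerivAt
          (fun t _ => hasDerivAt_log_iter hf hpos n t) (ch.intervalIntegrable _ _)
      have := intervalIntegral.abs_integral_le_integral_abs (f := h) (μ := MeasureTheory.volume) (hQP k).le
      rw [e] at this
      rw [Fsub]
      have h3 := neg_abs_le (Real.log (deriv (f^[n]) (P k)) - Real.log (deriv (f^[n]) (Q k)))
      linarith
    have ind : ∀ k, k ≤ n → k * σ ≤ F 1 - F (P k) := by
      intro k
      induction k with
      | zero => intro _; have := Fm (hP 0).1.2.le; simp; linarith
      | succ k ih =>
        intro hk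
        have a := ih (by omega)
        have b := Fk k (by omega)
        have c := Fm (hPQ k).le
        push_cast
        linarith
    have a := ind n le_rfl
    have b := Fm (hP n).1.1.le
    have F0 : F 0 = 0 := by simp [hF]
    have : F 1 = ∫ x in (0:ℝ)..1, |h x| := rfl
    linarith
  set C := ∫ x in (0:ℝ)..1, |deriv (deriv f) x / deriv f x|
  refine lt_of_lt_of_le hσ (Filter.le_liminf_of_le ?_ ?_)
  · apply Filter.IsBoundedUnder.isCoboundedUnder_ge
    refine ⟨C, ?_⟩
    rw [eventually_map]
    filter_upwards [eventually_gt_atTop 0] with n hn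
    have hn' : (0:ℝ) < n := by exact_mod_cast hn
    rw [one_div, inv_mul_le_iff₀ hn']
    exact upper hf hpos h0 h1 n
  · filter_upwards [eventually_gt_atTop 0] with n hn
    have hn' : (0:ℝ) < n := by exact_mod_cast hn
    rw [one_div, le_inv_mul_iff₀ hn']
    exact lower n

end gen

/-- The building block `sin(πx)^(2k+2)`. -/
noncomputable def bw (k : ℕ) (x : ℝ) : ℝ := Real.sin (Real.pi * x) ^ (2*k+2)

noncomputable def bw1 (k : ℕ) (x : ℝ) : ℝ :=
  (2*k+2) * Real.pi * (Real.sin (Real.pi * x) ^ (2*k+1) * Real.cos (Real.pi * x))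

noncomputable def bw2 (k : ℕ) (x : ℝ) : ℝ :=
  (2*k+2) * Real.pi^2 * ((2*k+1) * (Real.sin (Real.pi * x) ^ (2*k) * Real.cos (Real.pi * x) ^ 2)
    - Real.sin (Real.pi * x) ^ (2*k+2))

lemma bw_deriv (k : ℕ) (x : ℝ) : HasDerivAt (bw k) (bw1 k x) x := by
  have h1 : HasDerivAt (fun x : ℝ => Real.pi * x) Real.pi x := by
    simpa using (hasDerivAt_id x).const_mul Real.pi
  have := (h1.sin).pow (2*k+2)
  refine this.congr_deriv ?_
  rw [bw1, show 2*k+2-1 = 2*k+1 by omega]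
  push_cast
  ring

lemma bw1_deriv (k : ℕ) (x : ℝ) : HasDerivAt (bw1 k) (bw2 k x) x := by
  have h1 : HasDerivAt (fun x : ℝ => Real.pi * x) Real.pi x := by
    simpa using (hasDerivAt_id x).const_mul Real.pi
  have := (((h1.sin).pow (2*k+1)).mul h1.cos).const_mul ((2*k+2) * Real.pi)
  refine this.congr_deriv ?_
  rw [bw2, show 2*k+1-1 = 2*k by omega]
  simp only [Pi.pow_apply]
  push_cast
  ring

lemma bw2_cont (k : ℕ) : Continuous (bw2 k) := by
  unfold bw2; fun_prop

lemma wallis (n : ℕ) : (∏ i ∈ Finset.range n, ((2 * (i:ℝ) + 1) / (2 * i + 2))) ^ 2 ≤ 1 / (n + 1) := by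
  induction n with
  | zero => simp
  | succ n ih =>
    rw [Finset.prod_range_succ, mul_pow]
    have h : ((2 * (n:ℝ) + 1) / (2 * n + 2)) ^ 2 ≤ (n + 1) / (n + 2) := by
      rw [div_pow, div_le_div_iff₀ (by positivity) (by positivity)]
      have : (0:ℝ) ≤ n := by positivity
      nlinarith
    calc _ ≤ 1 / ((n:ℝ) + 1) * ((n + 1) / (n + 2)) := by gcongr
      _ = _ := by push_cast; field_simp; ring

lemma bw_int (k : ℕ) : ∫ x in (0:ℝ)..1, bw k x =
    ∏ i ∈ Finset.range (k+1), ((2 * (i:ℝ) + 1) / (2 * i + 2)) := by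
  unfold bw
  have := intervalIntegral.integral_comp_mul_left (a := 0) (b := 1) (c := Real.pi)
    (fun x => Real.sin x ^ (2*k+2)) Real.pi_ne_zero
  rw [this]
  have h2 := integral_sin_pow_even (k+1)
  rw [show 2*(k+1) = 2*k+2 by ring] at h2
  rw [mul_zero, mul_one, h2, smul_eq_mul, ← mul_assoc, inv_mul_cancel₀ Real.pi_ne_zero, one_mul]

lemma bw2_int (k : ℕ) : ∫ x in (0:ℝ)..1, |bw2 k x| ≤
    4 * (k+1) * Real.pi^2 * ∫ x in (0:ℝ)..1, bw k x := by
  have cb : Continuous (bw k) := by unfold bw; fun_prop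
  have e : ∫ x in (0:ℝ)..1, bw2 k x = 0 := by
    rw [intervalIntegral.integral_eq_sub_of_hasDerivAt (fun t _ => bw1_deriv k t)
      ((bw2_cont k).intervalIntegrable _ _)]
    simp [bw1]
  calc _ ≤ ∫ x in (0:ℝ)..1, (bw2 k x + 4 * (k+1) * Real.pi^2 * bw k x) := by
        apply intervalIntegral.integral_mono_on (by norm_num)
        · exact (bw2_cont k).abs.intervalIntegrable _ _
        · exact ((bw2_cont k).add (cb.const_mul _)).intervalIntegrable _ _
        · intro x _
          have p1 : 0 ≤ (2*k+2) * Real.pi^2 * Real.sin (Real.pi * x) ^ (2*k+2) := by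
            have : 0 ≤ Real.sin (Real.pi * x) ^ (2*k+2) := Even.pow_nonneg ⟨k+1, by ring⟩ _
            positivity
          have p2 : 0 ≤ (2*k+2) * Real.pi^2 * ((2*k+1) * (Real.sin (Real.pi * x) ^ (2*k) * Real.cos (Real.pi * x) ^ 2)) := by
            have : 0 ≤ Real.sin (Real.pi * x) ^ (2*k) := Even.pow_nonneg ⟨k, by ring⟩ _
            positivity
          rw [abs_le, bw, bw2]
          constructor <;> linarith
    _ = _ := by
      rw [intervalIntegral.integral_add ((bw2_cont k).intervalIntegrable _ _)
        ((cb.const_mul _).intervalIntegrable _ _), e, intervalIntegral.integral_const_mul, zero_add]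

lemma pi_sq_lt : Real.pi^2 < 10 := by
  have := Real.pi_lt_d2
  have := Real.pi_pos
  nlinarith

lemma bw2_int_one : ∫ x in (0:ℝ)..1, |bw2 1 x| ≤ 80 := by
  refine (bw2_int 1).trans ?_
  rw [bw_int]
  norm_num [Finset.prod_range_succ]
  nlinarith [pi_sq_lt]

lemma bw2_int_m (k m : ℕ) (hm : 0 < m) (hk : k + 1 = 2 * m^2) :
    ∫ x in (0:ℝ)..1, |bw2 k x| ≤ 80 * m := by
  refine (bw2_int k).trans ?_
  rw [bw_int]
  have hk' : (k:ℝ) + 1 = 2 * m^2 := by exact_mod_cast hk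
  have w := wallis (k+1)
  have hm' : (1:ℝ) ≤ m := by exact_mod_cast hm
  have w0 : 0 ≤ ∏ i ∈ Finset.range (k+1), ((2 * (i:ℝ) + 1) / (2 * i + 2)) :=
    Finset.prod_nonneg fun i _ => by positivity
  set Z := ∏ i ∈ Finset.range (k+1), ((2 * (i:ℝ) + 1) / (2 * i + 2))
  have w2 : Z ≤ 1 / m := by
    refine (sq_le_sq₀ w0 (by positivity)).mp ?_
    refine w.trans ?_
    rw [div_pow, one_pow]
    apply one_div_le_one_div_of_le (by positivity)
    push_cast
    nlinarith
  rw [hk']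
  calc 4 * (2 * (m:ℝ)^2) * Real.pi^2 * Z ≤ 4 * (2 * (m:ℝ)^2) * 10 * (1 / m) := by
        gcongr
        exact pi_sq_lt.le
    _ = _ := by field_simp; norm_num

lemma bw2_abs (k : ℕ) (x : ℝ) :
    |bw2 k x| ≤ 10 * (2*k+2)^2 * (Real.sin (Real.pi * x) ^ 2) ^ k := by
  have hs : 0 ≤ (Real.sin (Real.pi * x) ^ 2) ^ k := by positivity
  have e : bw2 k x = Real.pi^2 * ((2*k+2) * ((2*k+1) * Real.cos (Real.pi * x) ^ 2 - Real.sin (Real.pi * x) ^ 2)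
     * (Real.sin (Real.pi * x) ^ 2) ^ k) := by
    rw [bw2, ← pow_mul]; ring
  have sc := Real.sin_sq_add_cos_sq (Real.pi * x)
  have k0 : (0:ℝ) ≤ k := by positivity
  have b : |(2*(k:ℝ)+1) * Real.cos (Real.pi * x) ^ 2 - Real.sin (Real.pi * x) ^ 2| ≤ 2*(k:ℝ)+2 := by
    have s0 := sq_nonneg (Real.sin (Real.pi * x))
    have c0 := sq_nonneg (Real.cos (Real.pi * x))
    have c1 : Real.cos (Real.pi * x) ^ 2 ≤ 1 := by linarith
    have := mul_le_mul_of_nonneg_left c1 k0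
    have := mul_nonneg k0 c0
    rw [abs_le]; constructor <;> linarith
  rw [e, abs_mul, abs_mul, abs_mul, abs_of_nonneg hs, abs_of_nonneg (sq_nonneg Real.pi),
    abs_of_nonneg (by positivity : (0:ℝ) ≤ 2*k+2)]
  calc _ ≤ 10 * ((2*(k:ℝ)+2) * (2*k+2) * (Real.sin (Real.pi * x) ^ 2) ^ k) := by
        gcongr
        exact pi_sq_lt.le
    _ = _ := by ring

lemma bw_nonneg (k : ℕ) (x : ℝ) : 0 ≤ bw k x := Even.pow_nonneg ⟨k+1, by ring⟩ _

set_option maxHeartbeats 2000000 in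
theorem exists_analytic_c1ac_undistorted (K : ℝ) (hK0 : 0 < K) (hK2 : K ≤ 2) :
    ∃ f : ℝ → ℝ,
      (∀ x : ℝ, AnalyticAt ℝ f x) ∧
      (∀ x : ℝ, f (x + 1) = f x + 1) ∧
      (∀ x : ℝ, 0 < deriv f x) ∧
      (∀ x : ℝ, f x = x ↔ ∃ n : ℤ, x = (n : ℝ)) ∧
      deriv f 0 = 1 ∧
      deriv (deriv f) 0 = 0 ∧
      (∫ x in (0:ℝ)..1, |deriv (deriv f) x|) ≤ 2 * K ∧
      0 < Filter.liminf
        (fun n : ℕ => (1 / (n : ℝ)) *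
          ∫ x in (0:ℝ)..1, |deriv (deriv (f^[n])) x / deriv (f^[n]) x|)
        Filter.atTop := by
  have pip := Real.pi_pos
  have pi4 := Real.pi_lt_four
  have pi3 := Real.pi_gt_three
  set ε : ℝ := K / 1000 with hε
  have ε0 : 0 < ε := by positivity
  have ε1 : ε ≤ 1/500 := by rw [hε]; linarith
  set b₁ : ℝ := 1/2 - ε/4 with hb₁
  set b₂ : ℝ := 1/2 + ε/4 with hb₂
  have sb0 : 0 ≤ Real.sin (Real.pi * b₁) :=
    Real.sin_nonneg_of_nonneg_of_le_pi (by apply mul_nonneg pip.le; rw [hb₁]; linarith)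
      (by nlinarith)
  have sb1 : Real.sin (Real.pi * b₁) < 1 := by
    rw [← Real.sin_pi_div_two]
    apply Real.sin_lt_sin_of_lt_of_le_pi_div_two
    · nlinarith
    · exact le_rfl
    · nlinarith
  set r : ℝ := Real.sin (Real.pi * b₁) ^ 2 with hr
  have r0 : 0 ≤ r := sq_nonneg _
  have r1 : r < 1 := by rw [hr]; nlinarith
  have rh : 1/2 ≤ r := by
    have e : Real.sin (Real.pi * b₁) = Real.cos (Real.pi * ε / 4) := by
      rw [← Real.sin_pi_div_two_sub]; congr 1; rw [hb₁]; ring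
    have h2 := Real.one_sub_sq_div_two_le_cos (x := Real.pi * ε / 4)
    rw [← e] at h2
    have h3 : 0 ≤ Real.pi * ε / 4 := by positivity
    have h4 : Real.pi * ε / 4 ≤ 1/100 := by nlinarith
    rw [hr]; nlinarith
  -- choose m
  have lim : ∀ᶠ k : ℕ in atTop, 160 * ((k:ℝ)^2 * r^k) < 1/2 := by
    have t := (tendsto_pow_const_mul_const_pow_of_abs_lt_one 2
      (by rwa [abs_of_nonneg r0] : |r| < 1)).const_mul 160
    rw [mul_zero] at t
    exact t.eventually_lt_const (by norm_num)
  obtain ⟨k₀, hk₀⟩ := eventually_atTop.1 lim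
  obtain ⟨m₀, hm₀⟩ := exists_nat_gt (1 / (ε * K / 24000))
  set m := max k₀ m₀ + 1 with hmdef
  have hm : 0 < m := by omega
  have hm1 : (1:ℝ) ≤ m := by exact_mod_cast hm
  have hmp : (0:ℝ) < m := by linarith
  have hmδ : 1 / (m:ℝ) ≤ ε * K / 24000 := by
    have h1 : (m₀:ℝ) ≤ m := by exact_mod_cast (by omega : m₀ ≤ m)
    rw [one_div_le hmp (by positivity)]
    linarith
  have hm2 : m ≤ m^2 := by nlinarith
  obtain ⟨k, hk⟩ : ∃ k, k + 1 = 2 * m^2 := ⟨2*m^2 - 1, by omega⟩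
  have hk' : (k:ℝ) + 1 = 2 * m^2 := by exact_mod_cast hk
  have hkk : k₀ ≤ k := by omega
  have hk1 : (1:ℝ) ≤ k := by exact_mod_cast (by omega : 1 ≤ k)
  have hrk : 160 * ((k:ℝ)^2 * r^k) < 1/2 := hk₀ k hkk
  set a : ℝ := K / (1000 * m) with ha
  have a0 : 0 < a := by positivity
  have a1 : a ≤ 1 := by
    rw [ha, div_le_one (by positivity)]; nlinarith only [hm1, hK2]
  set f : ℝ → ℝ := fun x => x + ε * bw 1 x + a * bw k x with hf
  have d1 : ∀ x, HasDerivAt f (1 + ε * bw1 1 x + a * bw1 k x) x := fun x =>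
    ((hasDerivAt_id x).add ((bw_deriv 1 x).const_mul ε)).add ((bw_deriv k x).const_mul a)
  have e1 : deriv f = fun x => 1 + ε * bw1 1 x + a * bw1 k x := funext fun x => (d1 x).deriv
  have d2 : ∀ x, HasDerivAt (deriv f) (ε * bw2 1 x + a * bw2 k x) x := fun x => by
    rw [e1]
    exact ((((bw1_deriv 1 x).const_mul ε).const_add 1)).add ((bw1_deriv k x).const_mul a)
  have e2 : deriv (deriv f) = fun x => ε * bw2 1 x + a * bw2 k x := funext fun x => (d2 x).deriv
  have hcd : ContDiff ℝ ⊤ f := by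
    rw [hf]; unfold bw; fun_prop
  have han : ∀ x : ℝ, AnalyticAt ℝ f x := by
    intro x; rw [hf]; unfold bw; fun_prop
  have per : ∀ x : ℝ, f (x + 1) = f x + 1 := by
    intro x
    have hb : ∀ k, bw k (x+1) = bw k x := by
      intro k
      rw [bw, bw, mul_add, mul_one, Real.sin_add_pi]
      exact Even.neg_pow ⟨k+1, by ring⟩ _
    simp only [hf, hb]; ring
  have dper : ∀ x : ℝ, deriv f (x + 1) = deriv f x := by
    intro x
    rw [← deriv_comp_add_const, show (fun y => f (y + 1)) = fun y => f y + 1 from funext per,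
      deriv_add_const]
  have c2 : Continuous (deriv (deriv f)) := by
    rw [e2]; exact ((bw2_cont 1).const_mul _).add ((bw2_cont k).const_mul _)
  have hV : ∫ x in (0:ℝ)..1, |deriv (deriv f) x| ≤ K / 4 := by
    have i1 : IntervalIntegrable (fun x => ε * |bw2 1 x|) MeasureTheory.volume 0 1 :=
      ((bw2_cont 1).abs.const_mul _).intervalIntegrable _ _
    have i2 : IntervalIntegrable (fun x => a * |bw2 k x|) MeasureTheory.volume 0 1 :=
      ((bw2_cont k).abs.const_mul _).intervalIntegrable _ _
    calc _ ≤ ∫ x in (0:ℝ)..1, (ε * |bw2 1 x| + a * |bw2 k x|) := by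
          apply intervalIntegral.integral_mono_on (by norm_num)
          · exact c2.abs.intervalIntegrable _ _
          · exact i1.add i2
          · intro x _
            rw [e2]
            refine (abs_add_le _ _).trans ?_
            rw [abs_mul, abs_mul, abs_of_pos ε0, abs_of_pos a0]
      _ = ε * (∫ x in (0:ℝ)..1, |bw2 1 x|) + a * ∫ x in (0:ℝ)..1, |bw2 k x| := by
          rw [intervalIntegral.integral_add i1 i2, intervalIntegral.integral_const_mul,
            intervalIntegral.integral_const_mul]
      _ ≤ ε * 80 + a * (80 * m) := by
          gcongr
          · exact bw2_int_one
          · exact bw2_int_m k m hm hk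
      _ ≤ K / 4 := by
          have : a * (80 * m) = K / 1000 * 80 := by rw [ha]; field_simp
          rw [this, hε]; linarith
  have dz : deriv f 0 = 1 := by rw [e1]; simp [bw1]
  have hpos : ∀ x, 1/2 ≤ deriv f x := by
    have base : ∀ x ∈ Set.Ico (0:ℝ) 1, 1/2 ≤ deriv f x := by
      intro x hx
      have e : ∫ t in (0:ℝ)..x, deriv (deriv f) t = deriv f x - 1 := by
        rw [intervalIntegral.integral_deriv_eq_sub (fun t _ => (d2 t).differentiableAt)
          (c2.intervalIntegrable _ _), dz]
      have h1 := intervalIntegral.abs_integral_le_integral_abs (f := deriv (deriv f))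
        (μ := MeasureTheory.volume) hx.1
      have h2 : ∫ t in (0:ℝ)..x, |deriv (deriv f) t| ≤ ∫ t in (0:ℝ)..1, |deriv (deriv f) t| := by
        apply intervalIntegral.integral_mono_interval le_rfl hx.1 hx.2.le
        · exact Eventually.of_forall fun t => abs_nonneg _
        · exact c2.abs.intervalIntegrable _ _
      rw [e] at h1
      have h3 := neg_abs_le (deriv f x - 1)
      linarith
    have hp : Function.Periodic (deriv f) 1 := dper
    intro x
    obtain ⟨y, hy, hxy⟩ := hp.exists_mem_Ico₀ one_pos x
    rw [hxy]
    exact base y hy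
  have fixed : ∀ x : ℝ, f x = x ↔ ∃ n : ℤ, x = (n : ℝ) := by
    intro x
    have g1 := bw_nonneg 1 x
    have g2 := bw_nonneg k x
    have t1 := mul_nonneg ε0.le g1
    have t2 := mul_nonneg a0.le g2
    have : f x = x ↔ Real.sin (Real.pi * x) = 0 := by
      constructor
      · intro h
        simp only [hf] at h
        have h3 : ε * bw 1 x = 0 := by linarith
        have h4 : bw 1 x = 0 := (mul_eq_zero.1 h3).resolve_left ε0.ne'
        exact pow_eq_zero_iff (by norm_num) |>.1 h4
      · intro h; simp [hf, bw, h]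
    rw [this, Real.sin_eq_zero_iff]
    constructor
    · rintro ⟨n, hn⟩
      refine ⟨n, ?_⟩
      have : Real.pi * (x - n) = 0 := by linarith
      have := (mul_eq_zero.1 this).resolve_left pip.ne'
      linarith
    · rintro ⟨n, rfl⟩
      exact ⟨n, mul_comm _ _⟩
  have h0 : f 0 = 0 := by simp [hf, bw]
  have h1 : f 1 = 1 := by simp [hf, bw]
  have flow : ∀ x, x + ε * bw 1 x ≤ f x := fun x => by
    have := mul_nonneg a0.le (bw_nonneg k x)
    simp only [hf]; linarith
  have hlt : ∀ x, 0 < x → x < 1 → x < f x := by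
    intro x hx0 hx1
    have : 0 < Real.sin (Real.pi * x) := Real.sin_pos_of_pos_of_lt_pi (by positivity) (by nlinarith only [pip, hx1])
    have : 0 < bw 1 x := by unfold bw; positivity
    have := mul_pos ε0 this
    linarith [flow x]
  -- the point q
  set θ : ℝ := 1 / (2 * m) with hθ
  have θ0 : 0 < θ := by positivity
  have θm : θ ≤ 1/2 := by
    rw [hθ]; apply one_div_le_one_div_of_le <;> linarith
  set q : ℝ := 1/2 - θ / Real.pi with hq
  have θpi : θ / Real.pi ≤ θ := div_le_self θ0.le (by linarith)
  have sq : Real.sin (Real.pi * q) = Real.cos θ := by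
    rw [← Real.sin_pi_div_two_sub]; congr 1; rw [hq]; field_simp
  have cq : Real.cos (Real.pi * q) = Real.sin θ := by
    rw [← Real.cos_pi_div_two_sub]; congr 1; rw [hq]; field_simp
  have cos0 : 0 < Real.cos θ := Real.cos_pos_of_mem_Ioo ⟨by linarith, by linarith⟩
  have cos1 : Real.cos θ ≤ 1 := Real.cos_le_one _
  have sinl : 1 / (Real.pi * m) ≤ Real.sin θ := by
    have := Real.mul_le_sin θ0.le (by linarith)
    refine le_trans (le_of_eq ?_) this
    rw [hθ]; field_simp
  have cos2 : 1 - θ^2 ≤ Real.cos θ ^ 2 := by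
    have := Real.sin_sq_add_cos_sq θ
    have h2 := Real.sin_le θ0.le
    have h3 := Real.sin_nonneg_of_nonneg_of_le_pi θ0.le (by linarith)
    nlinarith only [this, h2, h3]
  have cosN : 1/2 ≤ Real.cos θ ^ (2*k+2) := by
    have hθ1 : θ^2 ≤ 1/4 := by nlinarith only [θ0, θm]
    have hb := one_add_mul_le_pow (a := -θ^2) (by linarith) (k+1)
    have e : 2*k+2 = 2*(k+1) := by ring
    rw [e, pow_mul]
    calc (1:ℝ)/2 = 1 + ((k+1:ℕ):ℝ) * (-θ^2) := by
          push_cast; rw [hk', hθ]; field_simp; norm_num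
      _ ≤ (1 + -θ^2)^(k+1) := hb
      _ ≤ _ := by
        apply pow_le_pow_left₀ (by linarith)
        linarith
  have cosO : 1/2 ≤ Real.cos θ ^ (2*k+1) := cosN.trans (pow_le_pow_of_le_one cos0.le cos1 (by omega))
  have cos4 : 1/2 ≤ Real.cos θ ^ 4 := cosN.trans (pow_le_pow_of_le_one cos0.le cos1 (by omega))
  have sin0 : 0 < Real.sin θ := lt_of_lt_of_le (by positivity) sinl
  have jq : 1 + K / 500 ≤ deriv f q := by
    rw [e1]
    simp only [bw1, sq, cq]
    have t1 : 0 ≤ ε * ((2 * ((1:ℕ):ℝ) + 2) * Real.pi * (Real.cos θ ^ (2 * 1 + 1) * Real.sin θ)) := by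
      positivity
    have t2 : K / 500 ≤ a * ((2 * (k:ℝ) + 2) * Real.pi * (Real.cos θ ^ (2 * k + 1) * Real.sin θ)) := by
      calc K / 500 = a * ((2 * (k:ℝ) + 2) * Real.pi * (1/2 * (1 / (Real.pi * m)))) := by
            rw [show 2 * (k:ℝ) + 2 = 4 * m^2 by linarith, ha]; field_simp; norm_num
        _ ≤ _ := by gcongr
    calc 1 + K / 500 = 1 + 0 + K / 500 := by ring
      _ ≤ _ := add_le_add (add_le_add le_rfl t1) t2
  have jp : deriv f (1/2) = 1 := by
    rw [e1]
    have : Real.pi * (1/2) = Real.pi / 2 := by ring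
    simp only [bw1, this, Real.cos_pi_div_two]; simp
  have fq : q + ε / 2 ≤ f q := by
    have h2 := flow q
    have h3 : bw 1 q = Real.cos θ ^ 4 := by rw [bw, sq]
    rw [h3] at h2
    have h5 := mul_le_mul_of_nonneg_left cos4 ε0.le
    linarith only [h2, h5]
  have θs : θ / Real.pi ≤ 1 / m := by
    refine θpi.trans ?_
    rw [hθ]; apply one_div_le_one_div_of_le <;> linarith
  have δs : ε * K / 24000 ≤ ε / 12000 := by
    have := mul_le_mul_of_nonneg_left hK2 ε0.le
    linarith only [this]
  have qp0 : 0 < θ / Real.pi := by positivity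
  -- second derivative outside
  have outL : ∀ x, Real.sin (Real.pi * x) ^ 2 ≤ r → |deriv (deriv f) x| ≤ 1 := by
    intro x hx
    rw [e2]
    refine (abs_add_le _ _).trans ?_
    rw [abs_mul, abs_mul, abs_of_pos ε0, abs_of_pos a0]
    have u1 := bw2_abs 1 x
    have u2 := bw2_abs k x
    have v1 : |bw2 1 x| ≤ 160 := by
      norm_num at u1
      have := Real.sin_sq_le_one (Real.pi * x)
      linarith
    have v2 : |bw2 k x| ≤ 1/2 := by
      refine u2.trans (le_trans ?_ hrk.le)
      have : (Real.sin (Real.pi * x) ^ 2) ^ k ≤ r ^ k := pow_le_pow_left₀ (sq_nonneg _) hx k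
      calc _ ≤ 10 * (2*(k:ℝ)+2*k)^2 * r^k := by gcongr; linarith
        _ = _ := by ring
    have w1 := mul_le_mul_of_nonneg_left v1 ε0.le
    have w2 := mul_le_mul a1 v2 (abs_nonneg _) (by norm_num)
    linarith
  have sL : ∀ x, 0 ≤ x → x ≤ b₁ → Real.sin (Real.pi * x) ^ 2 ≤ r := by
    intro x hx hxb
    have s0 : 0 ≤ Real.sin (Real.pi * x) :=
      Real.sin_nonneg_of_nonneg_of_le_pi (by positivity) (by nlinarith only [pip, hx, hxb, hb₁, ε0])
    have s1 : Real.sin (Real.pi * x) ≤ Real.sin (Real.pi * b₁) := by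
      apply Real.sin_le_sin_of_le_of_le_pi_div_two
      · have := mul_nonneg pip.le hx
        linarith
      · nlinarith only [pip, hb₁, ε0]
      · gcongr
    exact pow_le_pow_left₀ s0 s1 2
  have jump : 2 * (K / 2000) ≤ Real.log (deriv f q) - Real.log (deriv f (1/2)) := by
    rw [jp, Real.log_one, sub_zero]
    have h2 : Real.log (1 + K/500) ≤ Real.log (deriv f q) := Real.log_le_log (by positivity) jq
    have h3 := Real.one_sub_inv_le_log_of_pos (by positivity : 0 < 1 + K / 500)
    have h4 : K / 1000 ≤ 1 - (1 + K/500)⁻¹ := by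
      have : 1 - (1 + K/500)⁻¹ = (K/500) / (1 + K/500) := by field_simp; ring
      rw [this, le_div_iff₀ (by positivity)]
      nlinarith only [hK0, hK2]
    linarith
  refine ⟨f, han, per, fun x => by linarith [hpos x], fixed, dz, ?_, by linarith, ?_⟩
  · rw [e2]; simp [bw2]; right; omega
  · refine liminf_pos (q := q) (p := 1/2) (b₁ := b₁) (b₂ := b₂) (L := 1) (σ := K / 2000)
      (hcd.of_le le_top) hpos h0 h1 hlt (by linarith) ?_ (by norm_num) ?_ ?_ ?_ ?_ (by norm_num)
      ?_ ?_ (by positivity) jump ?_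
    · rw [hq]; linarith
    · rw [hq]; linarith
    · rw [hq] at fq ⊢; linarith
    · have h2 := flow b₁
      have h3 : bw 1 b₁ = r^2 := by rw [bw, hr]; ring
      rw [h3] at h2
      have h4 : (1/2:ℝ)^2 ≤ r^2 := pow_le_pow_left₀ (by norm_num) rh 2
      have h5 := mul_le_mul_of_nonneg_left h4 ε0.le
      linarith only [h2, h5, hb₁]
    · rw [hq] at fq ⊢; rw [hb₂]; linarith
    · intro x hx hxb; exact outL x (sL x hx hxb)
    · intro x hx hxb
      apply outL
      have := sL (1 - x) (by linarith) (by rw [hb₁]; linarith)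
      rwa [mul_sub, mul_one, Real.sin_pi_sub] at this
    · have e3 : Real.exp 1 ≤ 3 := by linarith [Real.exp_one_lt_d9]
      have hd : (1/2 - q) / (f q - q) ≤ (ε * K / 24000) / (ε / 2) := by
        apply div_le_div₀ (by positivity) _ (by positivity) (by linarith)
        rw [hq]; linarith
      have hd0 : 0 ≤ (1/2 - q) / (f q - q) := div_nonneg (by rw [hq]; linarith) (by linarith)
      have : (ε * K / 24000) / (ε / 2) = K / 12000 := by field_simp; norm_num
      rw [this] at hd
      have := mul_le_mul e3 hd hd0 (by norm_num)
      linarith
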